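/- Let 4 ≤ p < q, n = p + q, and suppose 2p = q + 4. Then D_{p,q}^{0,1} ≺_s B_{p,q}^{2,0} ≺_s B_{p,q}^{0,1} ≺_s B_{p,q}^{0,0}, and every tree T ∈ 𝒯_n^{p,q} isomorphic to none of these four trees satisfies T ≺_s D_{p,q}^{0,1}; that is, the last four trees in the S-order among 𝒯_n^{p,q} are D_{p,q}^{0,1}, B_{p,q}^{2,0}, B_{p,q}^{0,1}, B_{p,q}^{0,0}. -/

import Mathlib

open SimpleGraph

open scoped Classical in
/-- The adjacency matrix of a simple graph, with real entries. -/
noncomputable def adjMat {V : Type*} [Fintype V] (G : SimpleGraph V) : Matrix V V ℝ :=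
  Matrix.of fun a b => if G.Adj a b then 1 else 0

/-- The `k`-th spectral moment `S_k(G) = tr(A(G)^k)`. -/
noncomputable def spectralMoment {V : Type*} [Fintype V] [DecidableEq V]
    (G : SimpleGraph V) (k : ℕ) : ℝ :=
  Matrix.trace (adjMat G ^ k)

/-- `SLt G₁ G₂` means `G₁ ≺_s G₂`: for some `k` with `1 ≤ k ≤ n - 1`,
`S_i(G₁) = S_i(G₂)` for all `i < k` and `S_k(G₁) < S_k(G₂)`. -/
def SLt {V : Type*} [Fintype V] [DecidableEq V] (G₁ G₂ : SimpleGraph V) : Prop :=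
  ∃ k : ℕ, 1 ≤ k ∧ k ≤ Fintype.card V - 1 ∧
    (∀ i < k, spectralMoment G₁ i = spectralMoment G₂ i) ∧
    spectralMoment G₁ k < spectralMoment G₂ k

/-- The tree `B_{p,q}^{k,l}` on `p + q` vertices: vertex `0 = u` is adjacent to `1 = v`
and to the `q - 1` vertices `2, …, q`; the distinguished neighbor `2` of `u` carries the
`k` pendant leaves `q+1, …, q+k`; the `l` neighbors `3, …, l+2` of `u` carry one pendant
leaf each (`q+k+j` is attached to `j+2` for `1 ≤ j ≤ l`); and `v` carries the
`p - k - l - 1` pendant leaves `q+k+l+1, …, p+q-1`. -/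
def BTree (p q k l : ℕ) : SimpleGraph (Fin (p + q)) :=
  SimpleGraph.fromRel (fun a b =>
    (a.val = 0 ∧ b.val = 1) ∨
    (a.val = 0 ∧ 2 ≤ b.val ∧ b.val ≤ q) ∨
    (a.val = 2 ∧ q + 1 ≤ b.val ∧ b.val ≤ q + k) ∨
    (q + k + 1 ≤ b.val ∧ b.val ≤ q + k + l ∧ a.val = b.val - (q + k) + 2) ∨
    (a.val = 1 ∧ q + k + l + 1 ≤ b.val))

/-- The tree `D_{p,q}^{k,l}` on `p + q` vertices: vertex `1 = v` is adjacent to `0 = u`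
and to the `p - 1` vertices `2, …, p`; the distinguished neighbor `2` of `v` carries the
`k` pendant leaves `p+1, …, p+k`; the `l` neighbors `3, …, l+2` of `v` carry one pendant
leaf each; and `u` carries the `q - k - l - 1` pendant leaves `p+k+l+1, …, p+q-1`. -/
def DTree (p q k l : ℕ) : SimpleGraph (Fin (p + q)) :=
  SimpleGraph.fromRel (fun a b =>
    (a.val = 0 ∧ b.val = 1) ∨
    (a.val = 1 ∧ 2 ≤ b.val ∧ b.val ≤ p) ∨
    (a.val = 2 ∧ p + 1 ≤ b.val ∧ b.val ≤ p + k) ∨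
    (p + k + 1 ≤ b.val ∧ b.val ≤ p + k + l ∧ a.val = b.val - (p + k) + 2) ∨
    (a.val = 0 ∧ p + k + l + 1 ≤ b.val))

/-- `T ∈ 𝒯_{p+q}^{p,q}`: `T` is a tree on `p + q` vertices with a `(p,q)`-bipartition. -/
def TreeBip (p q : ℕ) (G : SimpleGraph (Fin (p + q))) : Prop :=
  G.IsTree ∧ ∃ A : Finset (Fin (p + q)), A.card = p ∧
    ∀ ⦃x y : Fin (p + q)⦄, G.Adj x y → (x ∈ A ↔ y ∉ A)

/-- Adjacency of vertex types in a tree with a centre (type `0`) that has two distinguished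
neighbours (types `1`, `2`) and further leaves (type `3`), while the leaves of type `4` hang on
the vertex of type `1` and those of type `5` on the vertex of type `2`. -/
def TypeAdj (i j : Fin 6) : Prop :=
  (i, j) ∈ ([(0, 1), (1, 0), (0, 2), (2, 0), (0, 3), (3, 0), (1, 4), (4, 1), (2, 5), (5, 2)] :
    List (Fin 6 × Fin 6))

instance (i j : Fin 6) : Decidable (TypeAdj i j) := by unfold TypeAdj; infer_instance

/-- `G` is the tree of `TypeAdj` with `a`, `b`, `c` leaves of types `3`, `4`, `5`. -/
def IsTwoBranch {V : Type*} [Fintype V] (G : SimpleGraph V) (a b c : ℕ) : Prop :=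
  ∃ κ : V → Fin 6, (∀ x y, G.Adj x y ↔ TypeAdj (κ x) (κ y)) ∧
    ∀ i, Nat.card {x // κ x = i} = (![1, 1, 1, a, b, c] : Fin 6 → ℕ) i

theorem IsTwoBranch.nonempty_iso {V W : Type*} [Fintype V] [Fintype W] {G : SimpleGraph V}
    {H : SimpleGraph W} {a b c : ℕ} (hG : IsTwoBranch G a b c) (hH : IsTwoBranch H a b c) :
    Nonempty (G ≃g H) := by
  obtain ⟨κ, hκ, hcard⟩ := hG
  obtain ⟨μ, hμ, hcard'⟩ := hH
  have hfib (i : Fin 6) : Nonempty ({x // κ x = i} ≃ {y // μ y = i}) :=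
    Finite.card_eq.mp ((hcard i).trans (hcard' i).symm)
  let f (i : Fin 6) := (hfib i).some
  let σ : V ≃ W := (Equiv.sigmaFiberEquiv κ).symm.trans
    ((Equiv.sigmaCongrRight f).trans (Equiv.sigmaFiberEquiv μ))
  have hσ (x : V) : μ (σ x) = κ x := (f (κ x) ⟨x, rfl⟩).2
  exact ⟨⟨σ, by intro x y; rw [hκ, hμ, hσ, hσ]⟩⟩

theorem Matrix.trace_mul_pow_succ_comm {m n : Type*} [Fintype m] [Fintype n] [DecidableEq m]
    [DecidableEq n] (P : Matrix m n ℝ) (Q : Matrix n m ℝ) (k : ℕ) :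
    ((P * Q) ^ (k + 1)).trace = ((Q * P) ^ (k + 1)).trace := by
  have key : (P * Q) ^ (k + 1) = P * ((Q * P) ^ k * Q) := by
    induction k with
    | zero => simp
    | succ k ih => rw [pow_succ, ih, pow_succ (Q * P)]; simp only [Matrix.mul_assoc]
  rw [key, Matrix.trace_mul_comm, Matrix.mul_assoc, ← pow_succ]

/-- The quotient matrix of `TypeAdj`. -/
def typeMatrix (a b c : ℝ) : Matrix (Fin 6) (Fin 6) ℝ :=
  !![0, 1, 1, a, 0, 0; 1, 0, 0, 0, b, 0; 1, 0, 0, 0, 0, c;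
     1, 0, 0, 0, 0, 0; 0, 1, 0, 0, 0, 0; 0, 0, 1, 0, 0, 0]

theorem IsTwoBranch.spectralMoment_succ {V : Type*} [Fintype V] [DecidableEq V]
    {G : SimpleGraph V} {a b c : ℕ} (hG : IsTwoBranch G a b c) (k : ℕ) :
    spectralMoment G (k + 1) = (typeMatrix a b c ^ (k + 1)).trace := by
  obtain ⟨κ, hκ, hcard⟩ := hG
  let K : Matrix V (Fin 6) ℝ := Matrix.of fun x i => if κ x = i then 1 else 0
  let Q : Matrix (Fin 6) V ℝ := Matrix.of fun i x => if TypeAdj i (κ x) then 1 else 0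
  have hA : adjMat G = K * Q := by
    ext x y
    have (j : Fin 6) : K x j * Q j y =
        if κ x = j then if TypeAdj (κ x) (κ y) then 1 else 0 else 0 := by
      by_cases h : κ x = j <;> simp [K, Q, h]
    simp [adjMat, Matrix.mul_apply, hκ, this]
  have hM : Q * K = typeMatrix a b c := by
    ext i j
    have h1 : (Q * K) i j = if TypeAdj i j then (Nat.card {x // κ x = j} : ℝ) else 0 := by
      have : ∀ x, Q i x * K x j = (if TypeAdj i j then 1 else 0) * if κ x = j then 1 else 0 := by
        intro x
        by_cases h : κ x = j <;> simp [K, Q, h]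
      simp only [Matrix.mul_apply, this, ← Finset.mul_sum]
      simp [Nat.card_eq_fintype_card, Fintype.card_subtype]
    rw [h1, hcard]
    fin_cases i <;> fin_cases j <;> simp [TypeAdj, typeMatrix]
  rw [spectralMoment, hA, Matrix.trace_mul_pow_succ_comm, hM]

theorem typeMatrix_sq (a b c : ℝ) : typeMatrix a b c ^ 2 =
    !![a + 2, 0, 0, 0, b, c; 0, b + 1, 1, a, 0, 0; 0, 1, c + 1, a, 0, 0;
       0, 1, 1, a, 0, 0; 1, 0, 0, 0, b, 0; 1, 0, 0, 0, 0, c] := by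
  rw [sq]
  ext i j
  fin_cases i <;> fin_cases j <;>
    simp [typeMatrix, Matrix.mul_apply, Fin.sum_univ_six] <;> ring

theorem typeMatrix_cube (a b c : ℝ) : typeMatrix a b c ^ 3 =
    !![0, b + a + 2, c + a + 2, a * (a + 2), 0, 0; a + b + 2, 0, 0, 0, b * (b + 1), c;
       a + c + 2, 0, 0, 0, b, c * (c + 1); a + 2, 0, 0, 0, b, c;
       0, b + 1, 1, a, 0, 0; 0, 1, c + 1, a, 0, 0] := by
  rw [pow_succ, typeMatrix_sq]
  ext i j
  fin_cases i <;> fin_cases j <;>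
    simp [typeMatrix, Matrix.mul_apply, Fin.sum_univ_six] <;> ring

section moments

variable {V : Type*} [Fintype V] [DecidableEq V] {G : SimpleGraph V} {a b c : ℕ}

theorem spectralMoment_zero (G : SimpleGraph V) : spectralMoment G 0 = Fintype.card V := by
  simp [spectralMoment]

theorem spectralMoment_one (G : SimpleGraph V) : spectralMoment G 1 = 0 := by
  simp [spectralMoment, Matrix.trace, adjMat]

theorem IsTwoBranch.spectralMoment_two (hG : IsTwoBranch G a b c) :
    spectralMoment G 2 = 2 * (a + b + c + 2) := by
  rw [hG.spectralMoment_succ 1, typeMatrix_sq]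
  simp [Matrix.trace, Fin.sum_univ_six]
  ring

theorem IsTwoBranch.spectralMoment_three (hG : IsTwoBranch G a b c) :
    spectralMoment G 3 = 0 := by
  rw [hG.spectralMoment_succ 2, typeMatrix_cube]
  simp [Matrix.trace, Fin.sum_univ_six]

theorem IsTwoBranch.spectralMoment_four (hG : IsTwoBranch G a b c) :
    spectralMoment G 4 =
      2 * ((a + 2) ^ 2 + (b + 1) ^ 2 + (c + 1) ^ 2) - 2 * 2 := by
  rw [hG.spectralMoment_succ 3, show 3 + 1 = 2 + 2 from rfl, pow_add, typeMatrix_sq]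
  simp [Matrix.trace, Fin.sum_univ_six]
  ring

theorem IsTwoBranch.spectralMoment_five (hG : IsTwoBranch G a b c) :
    spectralMoment G 5 = 0 := by
  rw [hG.spectralMoment_succ 4, show 4 + 1 = 2 + 3 from rfl, pow_add, typeMatrix_sq,
    typeMatrix_cube]
  simp [Matrix.trace, Fin.sum_univ_six]

theorem IsTwoBranch.spectralMoment_six (hG : IsTwoBranch G a b c) :
    spectralMoment G 6 = 2 * (8 + 12 * a + 6 * b + 6 * c + 3 * a * b + 3 * a * c +
      6 * a ^ 2 + 3 * b ^ 2 + 3 * c ^ 2 + a ^ 3 + b ^ 3 + c ^ 3) := by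
  rw [hG.spectralMoment_succ 5, show 5 + 1 = 3 + 3 from rfl, pow_add, typeMatrix_cube]
  simp [Matrix.trace, Fin.sum_univ_six]
  ring

end moments

theorem adjMat_eq_adjMatrix {V : Type*} [Fintype V] (G : SimpleGraph V) [DecidableRel G.Adj] :
    adjMat G = G.adjMatrix ℝ := by
  ext x y
  simp [adjMat, SimpleGraph.adjMatrix_apply]

section trees

variable {V : Type*} [Fintype V] [DecidableEq V] {G : SimpleGraph V} [DecidableRel G.Adj]

theorem spectralMoment_two_eq (G : SimpleGraph V) [DecidableRel G.Adj] :
    spectralMoment G 2 = 2 * (G.edgeFinset.card : ℝ) := by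
  rw [spectralMoment, adjMat_eq_adjMatrix, sq, Matrix.trace]
  simp only [Matrix.diag_apply, SimpleGraph.adjMatrix_mul_self_apply_self]
  exact_mod_cast G.sum_degrees_eq_twice_card_edges

theorem spectralMoment_three_eq_zero {A : Finset V}
    (hA : ∀ ⦃x y : V⦄, G.Adj x y → (x ∈ A ↔ y ∉ A)) : spectralMoment G 3 = 0 := by
  rw [spectralMoment, adjMat_eq_adjMatrix, pow_succ, sq, Matrix.trace]
  refine Finset.sum_eq_zero fun x _ => ?_
  simp only [Matrix.diag_apply, Matrix.mul_apply, SimpleGraph.adjMatrix_apply]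
  refine Finset.sum_eq_zero fun z _ => ?_
  rw [Finset.sum_mul]
  refine Finset.sum_eq_zero fun y _ => ?_
  by_cases h1 : G.Adj x y <;> by_cases h2 : G.Adj y z <;> by_cases h3 : G.Adj z x <;>
    simp [h1, h2, h3]
  have := hA h1
  have := hA h2
  have := hA h3
  tauto

theorem SimpleGraph.IsAcyclic.eq_of_adj_of_adj {V : Type*} {G : SimpleGraph V} (hG : G.IsAcyclic)
    {x y z w : V} (hxy : x ≠ y) (hxz : G.Adj x z) (hzy : G.Adj z y) (hxw : G.Adj x w)
    (hwy : G.Adj w y) : z = w := by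
  have hz : (Walk.cons hxz (Walk.cons hzy Walk.nil)).IsPath := by
    simp [Walk.cons_isPath_iff, hxz.ne, hzy.ne, hxy]
  have hw : (Walk.cons hxw (Walk.cons hwy Walk.nil)).IsPath := by
    simp [Walk.cons_isPath_iff, hxw.ne, hwy.ne, hxy]
  have := congrArg (fun P : G.Path x y => P.1.support)
    ((hG.subsingleton_path x y).elim ⟨_, hz⟩ ⟨_, hw⟩)
  simpa using this

theorem SimpleGraph.IsAcyclic.adjMatrix_sq_apply_sq {V : Type*} [Fintype V] {G : SimpleGraph V}
    [DecidableRel G.Adj] (hG : G.IsAcyclic) {x y : V} (hxy : x ≠ y) :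
    (G.adjMatrix ℝ * G.adjMatrix ℝ) x y * (G.adjMatrix ℝ * G.adjMatrix ℝ) y x =
      (G.adjMatrix ℝ * G.adjMatrix ℝ) x y := by
  have hsymm : (G.adjMatrix ℝ * G.adjMatrix ℝ) y x = (G.adjMatrix ℝ * G.adjMatrix ℝ) x y := by
    simp only [Matrix.mul_apply, SimpleGraph.adjMatrix_apply, G.adj_comm, mul_comm]
  rw [hsymm]
  by_cases h : ∃ z, G.Adj x z ∧ G.Adj z y
  · obtain ⟨z, hxz, hzy⟩ := h
    have : (G.adjMatrix ℝ * G.adjMatrix ℝ) x y = 1 := by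
      rw [Matrix.mul_apply, Finset.sum_eq_single z]
      · simp [hxz, hzy]
      · intro w _ hw
        by_cases h1 : G.Adj x w <;> by_cases h2 : G.Adj w y <;> simp [h1, h2]
        exact hw (hG.eq_of_adj_of_adj hxy h1 h2 hxz hzy)
      · simp
    rw [this, one_mul]
  · have : (G.adjMatrix ℝ * G.adjMatrix ℝ) x y = 0 := by
      rw [Matrix.mul_apply]
      refine Finset.sum_eq_zero fun z _ => ?_
      by_cases h1 : G.Adj x z <;> by_cases h2 : G.Adj z y <;> simp [h1, h2]
      exact h ⟨z, h1, h2⟩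
    rw [this, zero_mul]

theorem SimpleGraph.IsAcyclic.spectralMoment_four (hG : G.IsAcyclic) :
    spectralMoment G 4 = 2 * ∑ x, (G.degree x : ℝ) ^ 2 - 2 * (G.edgeFinset.card : ℝ) := by
  have hpair (x y : V) :
      (G.adjMatrix ℝ * G.adjMatrix ℝ) x y * (G.adjMatrix ℝ * G.adjMatrix ℝ) y x =
        (G.adjMatrix ℝ * G.adjMatrix ℝ) x y +
          if x = y then (G.degree x : ℝ) ^ 2 - G.degree x else 0 := by
    by_cases h : x = y
    · subst h
      rw [SimpleGraph.adjMatrix_mul_self_apply_self, if_pos rfl]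
      ring
    · rw [hG.adjMatrix_sq_apply_sq h, if_neg h, add_zero]
  have hcodeg : ∑ x, ∑ y, (G.adjMatrix ℝ * G.adjMatrix ℝ) x y = ∑ z, (G.degree z : ℝ) ^ 2 := by
    simp only [Matrix.mul_apply]
    rw [Finset.sum_congr rfl fun x _ => Finset.sum_comm, Finset.sum_comm]
    refine Finset.sum_congr rfl fun z _ => ?_
    simp only [← Finset.mul_sum, ← Finset.sum_mul]
    simp [SimpleGraph.adjMatrix_apply, G.adj_comm _ z, sq, Finset.sum_boole,
      ← SimpleGraph.card_neighborFinset_eq_degree, SimpleGraph.neighborFinset_eq_filter]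
  have hedge : ∑ x, (G.degree x : ℝ) = 2 * (G.edgeFinset.card : ℝ) := by
    exact_mod_cast G.sum_degrees_eq_twice_card_edges
  rw [spectralMoment, adjMat_eq_adjMatrix, show 4 = 2 + 2 from rfl, pow_add, sq, Matrix.trace]
  simp only [Matrix.diag_apply]
  simp only [Matrix.mul_apply (M := G.adjMatrix ℝ * G.adjMatrix ℝ), hpair,
    Finset.sum_add_distrib, hcodeg]
  simp only [Finset.sum_ite_eq, Finset.mem_univ, if_true, Finset.sum_sub_distrib, hedge]
  ring

end trees

/-- If the largest value of a function with sum `m` is less than `m - j`, then the sum of the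
squares is less than `(m - j) ^ 2 + j ^ 2`. -/
theorem sum_sq_lt_of_max_lt {ι : Type*} [DecidableEq ι] {s : Finset ι} {f : ι → ℕ}
    {x₀ : ι} {m j : ℕ} (hx₀ : x₀ ∈ s) (hmax : ∀ x ∈ s, f x ≤ f x₀) (hsum : ∑ x ∈ s, f x = m)
    (hj : f x₀ + j < m) :
    (∑ x ∈ s, f x ^ 2 : ℤ) < ((m : ℤ) - j) ^ 2 + (j : ℤ) ^ 2 := by
  have hsplit := Finset.add_sum_erase s f hx₀
  have hsplit2 := Finset.add_sum_erase s (fun x => (f x : ℤ) ^ 2) hx₀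
  obtain ⟨r, hr⟩ : ∃ r, ∑ x ∈ s.erase x₀, f x = r := ⟨_, rfl⟩
  have hrest1 : ∑ x ∈ s.erase x₀, (f x : ℤ) ^ 2 ≤ (r : ℤ) ^ 2 := by
    rw [← hr]
    push_cast
    exact Finset.sum_sq_le_sq_sum_of_nonneg fun x _ => by positivity
  have hrest2 : ∑ x ∈ s.erase x₀, (f x : ℤ) ^ 2 ≤ f x₀ * r := by
    rw [← hr]
    push_cast
    rw [Finset.mul_sum]
    refine Finset.sum_le_sum fun x hx => ?_
    have := hmax x (Finset.mem_of_mem_erase hx)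
    rw [sq]
    gcongr
  rw [hr, hsum] at hsplit
  rw [← hsplit2]
  obtain ⟨M, hM⟩ : ∃ M, f x₀ = M := ⟨_, rfl⟩
  rw [hM] at hsplit hj hrest2 ⊢
  have hm : (m : ℤ) = M + r := by exact_mod_cast hsplit.symm
  have hrj : (j : ℤ) + 1 ≤ r := by omega
  rw [hm]
  rcases le_or_gt r M with hle | hlt
  · have hle' : (r : ℤ) ≤ M := by exact_mod_cast hle
    nlinarith [mul_pos (show (0 : ℤ) < M - j by omega) (show (0 : ℤ) < r - j by omega)]
  · have hlt' : (M : ℤ) + 1 ≤ r := by exact_mod_cast hlt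
    nlinarith [sq_nonneg ((M : ℤ) + r - 2 * j), mul_nonneg (show (0 : ℤ) ≤ M + r by omega)
      (show (0 : ℤ) ≤ r - M - 1 by omega)]

section degrees

variable {V : Type*} [Fintype V] [DecidableEq V] {G : SimpleGraph V} [DecidableRel G.Adj]

theorem isTwoBranch_of_degrees {A : Finset V} (hA : ∀ ⦃x y : V⦄, G.Adj x y → (x ∈ A ↔ y ∉ A))
    {u v w : V} {a b c : ℕ} (hu : u ∈ A) (hv : v ∉ A) (hw : w ∉ A) (hvw : v ≠ w)
    (hdu : G.degree u = a + 2) (hAc : Aᶜ.card = a + 2)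
    (hleafA : ∀ x ∈ A, x ≠ u → G.degree x = 1) (hdv : G.degree v = b + 1)
    (hdw : G.degree w = c + 1) (hleaf : ∀ x ∉ A, x ≠ v → x ≠ w → G.degree x = 1) :
    IsTwoBranch G a b c := by
  have hN : G.neighborFinset u = Aᶜ := by
    refine Finset.eq_of_subset_of_card_le (fun x hx => ?_) ?_
    · rw [mem_neighborFinset] at hx
      simpa using (hA hx).mp hu
    · rw [hAc, card_neighborFinset_eq_degree, hdu]
  have hadj (x : V) : G.Adj u x ↔ x ∉ A := by
    rw [← mem_neighborFinset, hN, Finset.mem_compl]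
  have huniq {x y z : V} (hx : G.degree x = 1) (hy : G.Adj x y) (hz : G.Adj x z) : y = z := by
    obtain ⟨t, ht⟩ := Finset.card_eq_one.mp hx
    have hy' : y ∈ G.neighborFinset x := (mem_neighborFinset ..).mpr hy
    have hz' : z ∈ G.neighborFinset x := (mem_neighborFinset ..).mpr hz
    rw [ht, Finset.mem_singleton] at hy' hz'
    rw [hy', hz']
  have hnbr {x : V} (hx : x ∈ A) (hxu : x ≠ u) {y : V} (hxy : G.Adj x y) : y = v ∨ y = w := by
    by_contra! hne
    have hyA := (hA hxy).mp hx
    exact hxu (huniq (hleaf y hyA hne.1 hne.2) hxy.symm ((hadj y).mpr hyA).symm)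
  have hw_of {x : V} (hx : x ∈ A) (hxu : x ≠ u) (hxv : ¬ G.Adj x v) : G.Adj x w := by
    have hpos : 0 < G.degree x := by rw [hleafA x hx hxu]; exact one_pos
    obtain ⟨y, hy⟩ := (G.degree_pos_iff_exists_adj x).mp hpos
    rcases hnbr hx hxu hy with rfl | rfl
    · exact absurd hy hxv
    · exact hy
  have hnot {x : V} (hx : x ∈ A) (hxu : x ≠ u) (hxv : G.Adj x v) : ¬ G.Adj x w :=
    fun h => hvw (huniq (hleafA x hx hxu) hxv h)
  have hcard {t : V} (ht : t ∉ A) {d : ℕ} (hd : G.degree t = d + 1) :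
      (Finset.univ.filter fun x => x ≠ u ∧ G.Adj x t).card = d := by
    have : (Finset.univ.filter fun x => x ≠ u ∧ G.Adj x t) = (G.neighborFinset t).erase u := by
      ext x
      simp [G.adj_comm]
    rw [this, Finset.card_erase_of_mem (by simpa [G.adj_comm] using (hadj t).mpr ht),
      card_neighborFinset_eq_degree, hd, Nat.add_sub_cancel]
  have huv : u ≠ v := fun h => hv (h ▸ hu)
  have huw : u ≠ w := fun h => hw (h ▸ hu)
  let κ : V → Fin 6 := fun x =>
    if x = u then 0 else if x = v then 1 else if x = w then 2 else if x ∉ A then 3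
    else if G.Adj x v then 4 else 5
  have hκ0 (x : V) : κ x = 0 ↔ x = u := by grind
  have hκ1 (x : V) : κ x = 1 ↔ x = v := by grind
  have hκ2 (x : V) : κ x = 2 ↔ x = w := by grind
  have hκ3 (x : V) : κ x = 3 ↔ x ∉ A ∧ x ≠ v ∧ x ≠ w := by grind
  have hκ4 (x : V) : κ x = 4 ↔ x ≠ u ∧ G.Adj x v := by grind
  have hκ5 (x : V) : κ x = 5 ↔ x ≠ u ∧ G.Adj x w := by grind
  refine ⟨κ, ?_, ?_⟩
  · intro x y
    simp only [TypeAdj, List.mem_cons, Prod.mk.injEq, hκ0, hκ1, hκ2, hκ3, hκ4, hκ5,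
      List.not_mem_nil, or_false]
    constructor
    · intro h
      have hxy := hA h
      have hyx := h.symm
      by_cases hx : x ∈ A
      · by_cases hxu : x = u
        · grind
        · have := hnbr hx hxu h
          grind
      · have hy : y ∈ A := by tauto
        by_cases hyu : y = u
        · grind
        · have := hnbr hy hyu hyx
          grind
    · have huv' := (hadj v).mpr hv
      have huw' := (hadj w).mpr hw
      have hx := hadj x
      have hy := hadj y
      rw [G.adj_comm x y]
      rintro (⟨rfl, rfl⟩ | ⟨rfl, rfl⟩ | ⟨rfl, rfl⟩ | ⟨rfl, rfl⟩ | ⟨rfl, h, -⟩ | ⟨⟨h, -⟩, rfl⟩ |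
        ⟨rfl, -, h⟩ | ⟨⟨-, h⟩, rfl⟩ | ⟨rfl, -, h⟩ | ⟨⟨-, h⟩, rfl⟩)
      · exact huv'.symm
      · exact huv'
      · exact huw'.symm
      · exact huw'
      · exact (hy.mpr h).symm
      · exact hx.mpr h
      · exact h
      · exact h.symm
      · exact h
      · exact h.symm
  · intro i
    rw [Nat.card_eq_fintype_card, Fintype.card_subtype]
    fin_cases i
    · simp [hκ0, Finset.filter_eq']
    · simp [hκ1, Finset.filter_eq']
    · simp [hκ2, Finset.filter_eq']
    · have : (Finset.univ.filter fun x => κ x = 3) = (Aᶜ.erase v).erase w := by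
        ext x
        simp only [hκ3, Finset.mem_filter, Finset.mem_univ, true_and, Finset.mem_erase,
          Finset.mem_compl]
        tauto
      simp only [Fin.reduceFinMk, this]
      rw [Finset.card_erase_of_mem (by simp [hw, hvw.symm]),
        Finset.card_erase_of_mem (by simp [hv]), hAc]
      simp
    · simpa [hκ4] using hcard hv hdv
    · simpa [hκ5] using hcard hw hdw

end degrees

section explicit_trees

theorem card_subtype_val_mem {N : ℕ} {P : Fin N → Prop} {S : Finset ℕ} (hS : ∀ i ∈ S, i < N)
    (hP : ∀ x : Fin N, P x ↔ x.val ∈ S) : Nat.card {x // P x} = S.card := by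
  classical
  rw [Nat.card_eq_fintype_card, Fintype.card_subtype, ← Finset.card_map Fin.valEmbedding]
  congr 1
  ext t
  simp only [Finset.mem_map, Finset.mem_filter, Finset.mem_univ, true_and, hP,
    Fin.valEmbedding_apply]
  constructor
  · rintro ⟨x, hx, rfl⟩
    exact hx
  · intro ht
    exact ⟨⟨t, hS t ht⟩, ht, rfl⟩

theorem isTwoBranch_of_val {N : ℕ} {G : SimpleGraph (Fin N)} {u v w s t a b c : ℕ} (huv : u ≠ v)
    (huw : u ≠ w) (hvw : v ≠ w) (hu : u < s) (hv : v < s) (hw : w < s) (hs : s = a + 3)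
    (ht : t = s + c) (hN : N = t + b)
    (hG : ∀ x y : Fin N, G.Adj x y ↔
      ((x.val = u ∧ y.val < s ∧ y.val ≠ u) ∨ (x.val = v ∧ t ≤ y.val) ∨
        (x.val = w ∧ s ≤ y.val ∧ y.val < t)) ∨
      ((y.val = u ∧ x.val < s ∧ x.val ≠ u) ∨ (y.val = v ∧ t ≤ x.val) ∨
        (y.val = w ∧ s ≤ x.val ∧ x.val < t))) :
    IsTwoBranch G a b c := by
  let κ : Fin N → Fin 6 := fun x =>
    if x.val = u then 0 else if x.val = v then 1 else if x.val = w then 2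
    else if x.val < s then 3 else if t ≤ x.val then 4 else 5
  have hκ0 (x : Fin N) : κ x = 0 ↔ x.val = u := by grind
  have hκ1 (x : Fin N) : κ x = 1 ↔ x.val = v := by grind
  have hκ2 (x : Fin N) : κ x = 2 ↔ x.val = w := by grind
  have hκ3 (x : Fin N) : κ x = 3 ↔ x.val < s ∧ x.val ≠ u ∧ x.val ≠ v ∧ x.val ≠ w := by grind
  have hκ4 (x : Fin N) : κ x = 4 ↔ t ≤ x.val := by grind
  have hκ5 (x : Fin N) : κ x = 5 ↔ s ≤ x.val ∧ x.val < t := by grind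
  refine ⟨κ, ?_, ?_⟩
  · intro x y
    simp only [TypeAdj, List.mem_cons, Prod.mk.injEq, hκ0, hκ1, hκ2, hκ3, hκ4, hκ5,
      List.not_mem_nil, or_false, hG]
    constructor
    · grind
    · grind
  · intro i
    fin_cases i
    · exact (card_subtype_val_mem (S := {u}) (by simp; omega) (by simp [hκ0])).trans (by simp)
    · exact (card_subtype_val_mem (S := {v}) (by simp; omega) (by simp [hκ1])).trans (by simp)
    · exact (card_subtype_val_mem (S := {w}) (by simp; omega) (by simp [hκ2])).trans (by simp)
    · refine (card_subtype_val_mem (S := (((Finset.range s).erase u).erase v).erase w)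
        (by simp; omega) (by simp [hκ3]; omega)).trans ?_
      rw [Finset.card_erase_of_mem (by simp; omega), Finset.card_erase_of_mem (by simp; omega),
        Finset.card_erase_of_mem (by simp; omega)]
      simp
      omega
    · exact (card_subtype_val_mem (S := Finset.Ico t N) (by simp) (by simp [hκ4])).trans
        (by simp; omega)
    · exact (card_subtype_val_mem (S := Finset.Ico s t) (by simp; omega) (by simp [hκ5])).trans
        (by simp; omega)

variable {p q : ℕ}

theorem isTwoBranch_BTree_zero_zero (hp : 4 ≤ p) (hpq : p < q) :
    IsTwoBranch (BTree p q 0 0) (q - 2) (p - 1) 0 := by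
  refine isTwoBranch_of_val (u := 0) (v := 1) (w := 2) (s := q + 1) (t := q + 1)
    (by omega) (by omega) (by omega) (by omega) (by omega) (by omega) (by omega) (by omega)
    (by omega) fun x y => ?_
  simp only [BTree, fromRel_adj, ne_eq, Fin.ext_iff]
  omega

theorem isTwoBranch_BTree_zero_one (hp : 4 ≤ p) (hpq : p < q) :
    IsTwoBranch (BTree p q 0 1) (q - 2) (p - 2) 1 := by
  refine isTwoBranch_of_val (u := 0) (v := 1) (w := 3) (s := q + 1) (t := q + 2)
    (by omega) (by omega) (by omega) (by omega) (by omega) (by omega) (by omega) (by omega)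
    (by omega) fun x y => ?_
  simp only [BTree, fromRel_adj, ne_eq, Fin.ext_iff]
  omega

theorem isTwoBranch_BTree_two_zero (hp : 4 ≤ p) (hpq : p < q) :
    IsTwoBranch (BTree p q 2 0) (q - 2) (p - 3) 2 := by
  refine isTwoBranch_of_val (u := 0) (v := 1) (w := 2) (s := q + 1) (t := q + 3)
    (by omega) (by omega) (by omega) (by omega) (by omega) (by omega) (by omega) (by omega)
    (by omega) fun x y => ?_
  simp only [BTree, fromRel_adj, ne_eq, Fin.ext_iff]
  omega

theorem isTwoBranch_DTree_zero_one (hp : 4 ≤ p) (hpq : p < q) :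
    IsTwoBranch (DTree p q 0 1) (p - 2) (q - 2) 1 := by
  refine isTwoBranch_of_val (u := 1) (v := 0) (w := 3) (s := p + 1) (t := p + 2)
    (by omega) (by omega) (by omega) (by omega) (by omega) (by omega) (by omega) (by omega)
    (by omega) fun x y => ?_
  simp only [DTree, fromRel_adj, ne_eq, Fin.ext_iff]
  omega

end explicit_trees

/-- The comparison in the S-order when the fourth spectral moments differ. -/
theorem SLt.of_four {V : Type*} [Fintype V] [DecidableEq V] {G H : SimpleGraph V}
    (hV : 5 ≤ Fintype.card V) (h2 : spectralMoment G 2 = spectralMoment H 2)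
    (h3 : spectralMoment G 3 = spectralMoment H 3)
    (h4 : spectralMoment G 4 < spectralMoment H 4) : SLt G H := by
  refine ⟨4, by omega, by omega, fun i hi => ?_, h4⟩
  interval_cases i
  · rw [spectralMoment_zero, spectralMoment_zero]
  · rw [spectralMoment_one, spectralMoment_one]
  · exact h2
  · exact h3

theorem SLt.of_six {V : Type*} [Fintype V] [DecidableEq V] {G H : SimpleGraph V}
    (hV : 7 ≤ Fintype.card V) (h2 : spectralMoment G 2 = spectralMoment H 2)
    (h3 : spectralMoment G 3 = spectralMoment H 3) (h4 : spectralMoment G 4 = spectralMoment H 4)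
    (h5 : spectralMoment G 5 = spectralMoment H 5)
    (h6 : spectralMoment G 6 < spectralMoment H 6) : SLt G H := by
  refine ⟨6, by omega, by omega, fun i hi => ?_, h6⟩
  interval_cases i
  · rw [spectralMoment_zero, spectralMoment_zero]
  · rw [spectralMoment_one, spectralMoment_one]
  · exact h2
  · exact h3
  · exact h4
  · exact h5

/-- The degrees of a tree with a bipartition, reduced by one, and its fourth spectral moment in
terms of them. -/
theorem TreeBip.exists_excess {p q : ℕ} (hp : 4 ≤ p) (hpq : p < q)
    {T : SimpleGraph (Fin (p + q))} [DecidableRel T.Adj] (hT : TreeBip p q T) :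
    ∃ (A : Finset (Fin (p + q))) (e : Fin (p + q) → ℕ), A.card = p ∧ Aᶜ.card = q ∧
      (∀ ⦃x y : Fin (p + q)⦄, T.Adj x y → (x ∈ A ↔ y ∉ A)) ∧ (∀ x, T.degree x = e x + 1) ∧
      ∑ x ∈ A, e x = q - 1 ∧ ∑ x ∈ Aᶜ, e x = p - 1 ∧
      spectralMoment T 4 =
        2 * ((∑ x ∈ A, (e x : ℤ) ^ 2 + ∑ x ∈ Aᶜ, (e x : ℤ) ^ 2 : ℤ) : ℝ) + 4 * (p + q - 2) + 2 := by
  obtain ⟨hTree, A, hAp, hA⟩ := hT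
  have hAq : Aᶜ.card = q := by
    rw [Finset.card_compl, hAp, Fintype.card_fin]
    omega
  have hedge : T.edgeFinset.card + 1 = p + q := by
    simpa using hTree.card_edgeFinset
  have hpos (x) : 1 ≤ T.degree x := by
    have : Nontrivial (Fin (p + q)) := Fin.nontrivial_iff_two_le.mpr (by omega)
    exact hTree.1.preconnected.degree_pos_of_nontrivial x
  have hbip : T.IsBipartiteWith (A : Set (Fin (p + q))) ((Aᶜ : Finset _) : Set (Fin (p + q))) := by
    refine ⟨by simpa using disjoint_compl_right, fun x y hxy => ?_⟩
    have := hA hxy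
    simp only [Finset.coe_compl, Set.mem_compl_iff, SetLike.mem_coe]
    tauto
  have hsumA := isBipartiteWith_sum_degrees_eq_card_edges hbip
  have hsumC := isBipartiteWith_sum_degrees_eq_card_edges' hbip
  obtain ⟨e, he⟩ : ∃ e : Fin (p + q) → ℕ, ∀ x, T.degree x = e x + 1 :=
    ⟨fun x => T.degree x - 1, fun x => (Nat.sub_add_cancel (hpos x)).symm⟩
  have heA : ∑ x ∈ A, e x = q - 1 := by
    simp only [he, Finset.sum_add_distrib, Finset.sum_const, smul_eq_mul, mul_one] at hsumA
    omega
  have heC : ∑ x ∈ Aᶜ, e x = p - 1 := by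
    simp only [he, Finset.sum_add_distrib, Finset.sum_const, smul_eq_mul, mul_one] at hsumC
    omega
  refine ⟨A, e, hAp, hAq, hA, he, heA, heC, ?_⟩
  have h1 : ∑ x, (T.degree x : ℝ) ^ 2 =
      ∑ x, (e x : ℝ) ^ 2 + 2 * ((∑ x, e x : ℕ) : ℝ) + (p + q) := by
    simp only [he]
    push_cast
    simp only [add_sq, Finset.sum_add_distrib, Finset.mul_sum]
    simp
  have h2 : ((∑ x, e x : ℕ) : ℝ) = p + q - 2 := by
    rw [← Finset.sum_add_sum_compl A, heA, heC]
    push_cast [Nat.cast_sub (show 1 ≤ p by omega), Nat.cast_sub (show 1 ≤ q by omega)]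
    ring
  have h3 : (T.edgeFinset.card : ℝ) = p + q - 1 := by
    rw [eq_sub_iff_add_eq]
    exact_mod_cast hedge
  rw [hTree.2.spectralMoment_four, h1, h2, h3, Finset.sum_add_sum_compl]
  push_cast
  ring

/-- A tree with a `(p,q)`-bipartition that is none of the four extremal trees has smaller fourth
spectral moment than `D_{p,q}^{0,1}`. -/
theorem TreeBip.spectralMoment_four_lt {p q : ℕ} (hp : 4 ≤ p) (hpq : p < q) (h : 2 * p = q + 4)
    {T : SimpleGraph (Fin (p + q))} (hT : TreeBip p q T)
    (hD : ¬ IsTwoBranch T (p - 2) (q - 2) 1) (hB2 : ¬ IsTwoBranch T (q - 2) (p - 3) 2)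
    (hB1 : ¬ IsTwoBranch T (q - 2) (p - 2) 1) (hB0 : ¬ IsTwoBranch T (q - 2) (p - 1) 0) :
    spectralMoment T 4 < 2 * ((p : ℝ) ^ 2 + ((q : ℝ) - 1) ^ 2 + 2 ^ 2) - 2 * 2 := by
  classical
  obtain ⟨A, e, hAp, hAq, hA, he, heA, heC, hmoment⟩ := hT.exists_excess hp hpq
  suffices hlt : ∑ x ∈ A, (e x : ℤ) ^ 2 + ∑ x ∈ Aᶜ, (e x : ℤ) ^ 2 <
      ((q : ℤ) - 2) ^ 2 + 1 + ((p : ℤ) - 1) ^ 2 by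
    have hlt' : ((∑ x ∈ A, (e x : ℤ) ^ 2 + ∑ x ∈ Aᶜ, (e x : ℤ) ^ 2 : ℤ) : ℝ) <
        ((q : ℝ) - 2) ^ 2 + 1 + ((p : ℝ) - 1) ^ 2 := by exact_mod_cast hlt
    rw [hmoment]
    linarith
  have hq1 : ((q - 1 : ℕ) : ℤ) = q - 1 := by omega
  have hp1 : ((p - 1 : ℕ) : ℤ) = p - 1 := by omega
  have hqp : (q : ℤ) = 2 * p - 4 := by omega
  have hleC : ∑ x ∈ Aᶜ, (e x : ℤ) ^ 2 ≤ ((p : ℤ) - 1) ^ 2 := by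
    rw [← hp1, ← heC]
    push_cast
    exact Finset.sum_sq_le_sq_sum_of_nonneg fun x _ => by positivity
  obtain ⟨u, hu, humax⟩ := A.exists_max_image e (Finset.card_pos.mp (by omega))
  obtain ⟨v, hv, hvmax⟩ := Aᶜ.exists_max_image e (Finset.card_pos.mp (by omega))
  have hsplitA := Finset.add_sum_erase A e hu
  have hsplitC := Finset.add_sum_erase Aᶜ e hv
  obtain ⟨u', hu', humax'⟩ := (A.erase u).exists_max_image e
    (Finset.card_pos.mp (by rw [Finset.card_erase_of_mem hu]; omega))
  obtain ⟨w, hw, hwmax⟩ := (Aᶜ.erase v).exists_max_image e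
    (Finset.card_pos.mp (by rw [Finset.card_erase_of_mem hv]; omega))
  have hsplitA' := Finset.add_sum_erase _ e hu'
  have hsplitC' := Finset.add_sum_erase _ e hw
  rw [Finset.mem_compl] at hv
  have hwv : w ≠ v := Finset.ne_of_mem_erase hw
  have hwA : w ∉ A := by simpa using Finset.mem_of_mem_erase hw
  have huu' : u' ≠ u := Finset.ne_of_mem_erase hu'
  have hu'A : u' ∈ A := Finset.mem_of_mem_erase hu'
  have hzero {s : Finset (Fin (p + q))} (hs : ∑ x ∈ s, e x = 0) (x) (hx : x ∈ s) :
      T.degree x = 1 := by rw [he, Finset.sum_eq_zero_iff.mp hs x hx]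
  have hpos_max {s : Finset (Fin (p + q))} {z} (hz : ∀ x ∈ s, e x ≤ e z)
      (hs : 0 < ∑ x ∈ s, e x) : 0 < e z := by
    by_contra! h0
    exact hs.ne' (Finset.sum_eq_zero fun x hx => by have := hz x hx; omega)
  have hB {b c : ℕ} (hu1 : e u = q - 1) (hvb : e v = b) (hwc : e w = c) (hbc : b + c = p - 1) :
      IsTwoBranch T (q - 2) b c :=
    isTwoBranch_of_degrees hA hu hv hwA hwv.symm (by rw [he]; omega) (by omega)
      (fun x hx hxu => hzero (s := A.erase u) (by omega) x (by simp [hx, hxu]))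
      (by rw [he, hvb]) (by rw [he, hwc])
      (fun x hx hxv hxw => hzero (s := (Aᶜ.erase v).erase w) (by omega) x (by simp [hx, hxv, hxw]))
  have hsqA := Finset.add_sum_erase A (fun x => (e x : ℤ) ^ 2) hu
  have hsqC := Finset.add_sum_erase Aᶜ (fun x => (e x : ℤ) ^ 2) (Finset.mem_compl.mpr hv)
  rcases lt_or_ge (e u + 1) (q - 1) with hlow | hhigh
  · have := sum_sq_lt_of_max_lt hu humax heA hlow
    rw [hq1] at this
    push_cast at this
    linarith
  by_cases hu1 : e u = q - 1
  · have hA1 : ∑ x ∈ A, (e x : ℤ) ^ 2 ≤ ((q : ℤ) - 1) ^ 2 := by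
      rw [← hq1, ← heA]
      push_cast
      exact Finset.sum_sq_le_sq_sum_of_nonneg fun x _ => by positivity
    rcases lt_or_ge (e v + 2) (p - 1) with hlow | hhigh'
    · have hlt := sum_sq_lt_of_max_lt (Finset.mem_compl.mpr hv) hvmax heC hlow
      rw [hp1] at hlt
      push_cast at hlt
      nlinarith [hA1]
    have hw_pos := hpos_max hwmax
    by_cases hw0 : e v + e w = p - 1
    · have hw2 : e w = 0 ∨ e w = 1 ∨ e w = 2 := by omega
      rcases hw2 with hw2 | hw2 | hw2
      · exact absurd (hB hu1 (by omega) hw2 (by omega)) hB0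
      · exact absurd (hB hu1 (by omega) hw2 (by omega)) hB1
      · exact absurd (hB hu1 (by omega) hw2 (by omega)) hB2
    · have hv3 : e v = p - 3 := by omega
      have := sum_sq_lt_of_max_lt (j := 0) hw hwmax rfl (by omega)
      have hr : ∑ x ∈ Aᶜ.erase v, e x = 2 := by omega
      rw [hr] at this
      have hv3' : (e v : ℤ) = p - 3 := by omega
      simp only [hv3'] at hsqC
      push_cast at this
      nlinarith
  · have hu2 : e u = q - 2 := by omega
    have hr : ∑ x ∈ A.erase u, e x = 1 := by omega
    have hu'1 : e u' = 1 := by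
      have := hpos_max humax' (by omega)
      omega
    by_cases hv1 : e v = p - 1
    · refine absurd (isTwoBranch_of_degrees (A := Aᶜ) (u := v) (v := u) (w := u') ?_
        (by simpa using hv) (by simpa using hu) (by simpa using hu'A) huu'.symm
        (by rw [he]; omega) (by rw [compl_compl]; omega)
        (fun x hx hxv => hzero (s := Aᶜ.erase v) (by omega) x
          (by simp [hxv, Finset.mem_compl.mp hx]))
        (by rw [he]; omega) (by rw [he, hu'1])
        (fun x hx hxu hxu' => hzero (s := (A.erase u).erase u') (by omega) x
          (by simpa [hxu, hxu'] using hx))) hD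
      intro x y hxy
      rw [Finset.mem_compl, Finset.mem_compl, hA hxy]
    · have hC := sum_sq_lt_of_max_lt (j := 0) (Finset.mem_compl.mpr hv) hvmax heC (by omega)
      rw [hp1] at hC
      have hA1 : ∑ x ∈ A.erase u, (e x : ℤ) ^ 2 ≤ 1 := by
        have := Finset.sum_sq_le_sq_sum_of_nonneg (s := A.erase u) (f := fun x => (e x : ℤ))
          fun x _ => by positivity
        rwa [show ∑ x ∈ A.erase u, (e x : ℤ) = 1 by exact_mod_cast hr, one_pow] at this
      have hu2' : (e u : ℤ) = q - 2 := by omega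
      simp only [hu2'] at hsqA
      push_cast at hC
      linarith

/-- For `4 ≤ p < q`, `n = p + q` and `2p = q + 4`, one has
`D_{p,q}^{0,1} ≺_s B_{p,q}^{2,0} ≺_s B_{p,q}^{0,1} ≺_s B_{p,q}^{0,0}`, and every tree
`T ∈ 𝒯_n^{p,q}` isomorphic to none of these four trees satisfies
`T ≺_s D_{p,q}^{0,1}`: the last four trees in the S-order among `𝒯_n^{p,q}` are
`D_{p,q}^{0,1}, B_{p,q}^{2,0}, B_{p,q}^{0,1}, B_{p,q}^{0,0}`. -/
theorem stmt_12 (p q : ℕ) (hp : 4 ≤ p) (hpq : p < q) (h : 2 * p = q + 4) :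
    SLt (DTree p q 0 1) (BTree p q 2 0) ∧
    SLt (BTree p q 2 0) (BTree p q 0 1) ∧
    SLt (BTree p q 0 1) (BTree p q 0 0) ∧
    ∀ T : SimpleGraph (Fin (p + q)), TreeBip p q T →
      ¬ Nonempty (T ≃g DTree p q 0 1) → ¬ Nonempty (T ≃g BTree p q 2 0) →
      ¬ Nonempty (T ≃g BTree p q 0 1) → ¬ Nonempty (T ≃g BTree p q 0 0) →
      SLt T (DTree p q 0 1) := by
  have hD := isTwoBranch_DTree_zero_one hp hpq
  have hB2 := isTwoBranch_BTree_two_zero hp hpq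
  have hB1 := isTwoBranch_BTree_zero_one hp hpq
  have hB0 := isTwoBranch_BTree_zero_zero hp hpq
  have hcard : Fintype.card (Fin (p + q)) = p + q := Fintype.card_fin _
  have hq : (q : ℝ) = 2 * p - 4 := by
    have : (2 * p : ℝ) = q + 4 := by exact_mod_cast h
    linarith
  have hp5 : (5 : ℝ) ≤ p := by exact_mod_cast (show 5 ≤ p by omega)
  have hp1 : ((p - 1 : ℕ) : ℝ) = p - 1 := by rw [Nat.cast_sub (by omega)]; norm_num
  have hp2 : ((p - 2 : ℕ) : ℝ) = p - 2 := by rw [Nat.cast_sub (by omega)]; norm_num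
  have hp3 : ((p - 3 : ℕ) : ℝ) = p - 3 := by rw [Nat.cast_sub (by omega)]; norm_num
  have hq2 : ((q - 2 : ℕ) : ℝ) = q - 2 := by rw [Nat.cast_sub (by omega)]; norm_num
  refine ⟨SLt.of_six (by omega) ?_ ?_ ?_ ?_ ?_, SLt.of_four (by omega) ?_ ?_ ?_,
    SLt.of_four (by omega) ?_ ?_ ?_, fun T hT hTD hTB2 hTB1 hTB0 => ?_⟩
  · rw [hD.spectralMoment_two, hB2.spectralMoment_two, hp2, hp3, hq2]
    push_cast
    ring
  · rw [hD.spectralMoment_three, hB2.spectralMoment_three]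
  · rw [hD.spectralMoment_four, hB2.spectralMoment_four, hp2, hp3, hq2, hq]
    push_cast
    ring
  · rw [hD.spectralMoment_five, hB2.spectralMoment_five]
  · rw [hD.spectralMoment_six, hB2.spectralMoment_six, hp2, hp3, hq2, hq]
    push_cast
    nlinarith
  · rw [hB2.spectralMoment_two, hB1.spectralMoment_two, hp2, hp3]
    push_cast
    ring
  · rw [hB2.spectralMoment_three, hB1.spectralMoment_three]
  · rw [hB2.spectralMoment_four, hB1.spectralMoment_four, hp2, hp3]
    push_cast
    nlinarith
  · rw [hB1.spectralMoment_two, hB0.spectralMoment_two, hp1, hp2]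
    push_cast
    ring
  · rw [hB1.spectralMoment_three, hB0.spectralMoment_three]
  · rw [hB1.spectralMoment_four, hB0.spectralMoment_four, hp1, hp2]
    push_cast
    nlinarith
  · classical
    have h4 := hT.spectralMoment_four_lt hp hpq h (fun hb => hTD (hb.nonempty_iso hD))
      (fun hb => hTB2 (hb.nonempty_iso hB2)) (fun hb => hTB1 (hb.nonempty_iso hB1))
      (fun hb => hTB0 (hb.nonempty_iso hB0))
    obtain ⟨hTree, A, -, hA⟩ := hT
    refine SLt.of_four (by omega) ?_ ?_ ?_
    · have hedge : (T.edgeFinset.card : ℝ) + 1 = p + q := by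
        exact_mod_cast hTree.card_edgeFinset.trans hcard
      rw [spectralMoment_two_eq, hD.spectralMoment_two, hp2, hq2]
      push_cast
      linarith
    · rw [spectralMoment_three_eq_zero hA, hD.spectralMoment_three]
    · refine h4.trans_eq ?_
      rw [hD.spectralMoment_four, hp2, hq2]
      push_cast
      ring
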